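/- arXiv:2512.02149 — 2 statements merged into one kernel-verified Lean document; each statement's English description precedes it below -/
import Mathlib

section
/- Let k ≥ 1. The minimum Hamming distance of the linear simplex α code S_k^α equals (q−1)·q^(sk−1): for every nonzero x ∈ R^k the number of v ∈ R^k with x·v ≠ 0 is at least (q−1)·q^(sk−1), and there exists a nonzero x ∈ R^k for which this number is exactly (q−1)·q^(sk−1). -/
/-!
Let `R` be a finite local ring with maximal ideal `𝔪` and residue field of cardinality `q`. The
linear form `v ↦ x · v` on `Rⁿ` has range the ideal `I` generated by the entries of `x`, so it
vanishes at `|R|ⁿ / |I|` points, and its weight is smallest when `|I|` is. For `a ≠ 0`, Nakayama's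
lemma makes `aR / a𝔪` a one-dimensional vector space over `R / 𝔪`, so `|aR| = q |a𝔪|`. Hence a
nonzero ideal has at least `q` elements, and a minimal nonzero ideal has exactly `q`. If `𝔪` is
generated by a nilpotent `γ`, the same equality along `R ⊇ γR ⊇ γ²R ⊇ ⋯` computes `|R|`.
-/

open IsLocalRing

section LinearMap

variable {R M N : Type*} [Ring R] [AddCommGroup M] [Module R M] [AddCommGroup N] [Module R N]

theorem natCard_ker_mul_natCard_range (f : M →ₗ[R] N) :
    Nat.card f.ker * Nat.card f.range = Nat.card M := by
  rw [Submodule.card_eq_card_quotient_mul_card f.ker, Nat.card_congr f.quotKerEquivRange.toEquiv]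

theorem natCard_apply_ne_zero [Finite M] (f : M →ₗ[R] N) :
    Nat.card {v // f v ≠ 0} = Nat.card M - Nat.card f.ker := by
  classical
  have hsum : Nat.card f.ker + Nat.card {v // f v ≠ 0} = Nat.card M := by
    rw [← Nat.card_sum]
    exact Nat.card_congr (Equiv.sumCompl fun v => v ∈ f.ker)
  omega

end LinearMap

section LinearForm

variable {R ι : Type*} [CommRing R] [Fintype ι]

theorem natCard_sum_mul_ne_zero [Finite R] (x : ι → R) :
    Nat.card {v : ι → R // ∑ i, x i * v i ≠ 0} =
      Nat.card R ^ Fintype.card ι - Nat.card (Fintype.linearCombination R x).ker := by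
  rw [← Nat.card_eq_fintype_card, ← Nat.card_fun, ← natCard_apply_ne_zero]
  simp only [Fintype.linearCombination_apply, smul_eq_mul, mul_comm]

theorem natCard_ker_linearCombination_mul_natCard_span (x : ι → R) :
    Nat.card (Fintype.linearCombination R x).ker * Nat.card (Ideal.span (Set.range x)) =
      Nat.card R ^ Fintype.card ι := by
  rw [← Nat.card_eq_fintype_card, ← Nat.card_fun,
    ← natCard_ker_mul_natCard_range (Fintype.linearCombination R x),
    Fintype.range_linearCombination, Ideal.span]

end LinearForm

theorem nilpotencyClass_eq_of_pow_pred_ne_zero {M : Type*} [MonoidWithZero M] [Nontrivial M]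
    {x : M} {s : ℕ} (hzero : x ^ s = 0) (hne : 2 ≤ s → x ^ (s - 1) ≠ 0) :
    nilpotencyClass x = s := by
  match s with
  | 0 => exact absurd ((pow_zero x).symm.trans hzero) one_ne_zero
  | 1 => exact nilpotencyClass_eq_one.2 ((pow_one x).symm.trans hzero)
  | n + 2 => exact nilpotencyClass_eq_succ_iff.2 ⟨hzero, hne (Nat.le_add_left 2 n)⟩

section LocalRing

variable {R : Type*} [CommRing R] [IsLocalRing R]

theorem maximalIdeal_mul_span_singleton_lt {a : R} (ha : a ≠ 0) :
    maximalIdeal R * Ideal.span {a} < Ideal.span {a} := by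
  refine Ideal.mul_le_right.lt_of_ne fun h => ha ?_
  exact Ideal.span_singleton_eq_bot.mp <| Submodule.eq_bot_of_le_smul_of_le_jacobson_bot _ _
    (Submodule.fg_span_singleton a) h.ge (maximalIdeal_le_jacobson _)

theorem natCard_span_singleton_eq_mul {a : R} (ha : a ≠ 0) :
    Nat.card (Ideal.span {a}) =
      Nat.card (ResidueField R) * Nat.card ↥(maximalIdeal R * Ideal.span {a}) := by
  let aR : Ideal R := Ideal.span {a}
  have hlt : maximalIdeal R * aR < aR := maximalIdeal_mul_span_singleton_lt ha
  let a𝔪 : Submodule R aR := (maximalIdeal R * aR).submoduleOf aR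
  let generator : aR := ⟨a, Ideal.mem_span_singleton_self a⟩
  let f : R →ₗ[R] aR ⧸ a𝔪 := a𝔪.mkQ ∘ₗ LinearMap.toSpanSingleton R aR generator
  have mem_ker (r : R) : r ∈ f.ker ↔ r * a ∈ maximalIdeal R * aR :=
    Submodule.Quotient.mk_eq_zero a𝔪
  have ker_eq : f.ker = maximalIdeal R := by
    refine le_antisymm (le_maximalIdeal fun htop => hlt.not_ge ?_) fun r hr =>
      (mem_ker r).2 (Ideal.mul_mem_mul hr generator.2)
    rw [Ideal.span_singleton_le_iff_mem, ← one_mul a, ← mem_ker, htop]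
    exact Submodule.mem_top
  have f_surjective : Function.Surjective f := by
    refine a𝔪.mkQ_surjective.comp ?_
    rintro ⟨b, hb⟩
    obtain ⟨r, rfl⟩ := Ideal.mem_span_singleton'.1 hb
    exact ⟨r, rfl⟩
  have residueField_card : Nat.card (ResidueField R) = Nat.card (aR ⧸ a𝔪) := by
    rw [← Nat.card_congr (f.quotKerEquivOfSurjective f_surjective).toEquiv, ker_eq]
    rfl
  calc
    Nat.card aR = Nat.card a𝔪 * Nat.card (aR ⧸ a𝔪) := Submodule.card_eq_card_quotient_mul_card a𝔪
    _ = Nat.card (ResidueField R) * Nat.card ↥(maximalIdeal R * aR) := by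
      rw [residueField_card, Nat.card_congr (Submodule.submoduleOfEquivOfLe hlt.le).toEquiv,
        mul_comm]

theorem natCard_residueField_le_natCard {I : Ideal R} [Finite I] (hI : I ≠ ⊥) :
    Nat.card (ResidueField R) ≤ Nat.card I := by
  obtain ⟨a, ha, ha0⟩ := Submodule.exists_mem_ne_zero_of_ne_bot hI
  have hle : Ideal.span {a} ≤ I := (Ideal.span_singleton_le_iff_mem I).2 ha
  have : Finite (Ideal.span {a}) := .of_injective _ (Submodule.inclusion_injective hle)
  calc
    Nat.card (ResidueField R) ≤ Nat.card (Ideal.span {a}) :=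
      Nat.le_of_dvd Nat.card_pos (Dvd.intro _ (natCard_span_singleton_eq_mul ha0).symm)
    _ ≤ Nat.card I := Nat.card_mono (Set.toFinite (I : Set R)) hle

theorem exists_ne_zero_maximalIdeal_mul_span_singleton_eq_bot (R : Type*) [CommRing R]
    [IsLocalRing R] [IsArtinianRing R] :
    ∃ a : R, a ≠ 0 ∧ maximalIdeal R * Ideal.span {a} = ⊥ := by
  obtain ⟨I, hI, -⟩ := (eq_bot_or_exists_atom_le (⊤ : Ideal R)).resolve_left top_ne_bot
  obtain ⟨a, ha, ha0⟩ := Submodule.exists_mem_ne_zero_of_ne_bot hI.1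
  exact ⟨a, ha0, hI.2 _ ((maximalIdeal_mul_span_singleton_lt ha0).trans_le
    ((Ideal.span_singleton_le_iff_mem I).2 ha))⟩

theorem exists_natCard_span_singleton_eq_natCard_residueField (R : Type*) [CommRing R]
    [IsLocalRing R] [IsArtinianRing R] :
    ∃ a : R, a ≠ 0 ∧ Nat.card (Ideal.span {a}) = Nat.card (ResidueField R) := by
  obtain ⟨a, ha, ha𝔪⟩ := exists_ne_zero_maximalIdeal_mul_span_singleton_eq_bot R
  refine ⟨a, ha, ?_⟩
  rw [natCard_span_singleton_eq_mul ha, ha𝔪, Nat.card_unique (α := (⊥ : Ideal R)), mul_one]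

theorem natCard_eq_pow_mul_natCard_span_pow {γ : R} (hmax : maximalIdeal R = Ideal.span {γ})
    {j : ℕ} (hj : ∀ i < j, γ ^ i ≠ 0) :
    Nat.card R = Nat.card (ResidueField R) ^ j * Nat.card (Ideal.span {γ ^ j}) := by
  induction j with
  | zero =>
    rw [pow_zero, pow_zero, one_mul, Ideal.span_singleton_one]
    exact (Nat.card_congr Submodule.topEquiv.toEquiv).symm
  | succ j ih =>
    have card_span_pow : Nat.card (Ideal.span {γ ^ j}) =
        Nat.card (ResidueField R) * Nat.card (Ideal.span {γ ^ (j + 1)}) := by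
      rw [natCard_span_singleton_eq_mul (hj j j.lt_succ_self), hmax,
        Ideal.span_singleton_mul_span_singleton, ← pow_succ']
    rw [ih fun i hi => hj i (hi.trans j.lt_succ_self), card_span_pow, pow_succ (Nat.card _),
      mul_assoc]

theorem natCard_eq_natCard_residueField_pow_nilpotencyClass {γ : R}
    (hmax : maximalIdeal R = Ideal.span {γ}) (hγ : IsNilpotent γ) :
    Nat.card R = Nat.card (ResidueField R) ^ nilpotencyClass γ := by
  have hpow : ∀ i < nilpotencyClass γ, γ ^ i ≠ 0 := fun _ => Nat.notMem_of_lt_sInf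
  rw [natCard_eq_pow_mul_natCard_span_pow hmax hpow, pow_nilpotencyClass hγ,
    Ideal.span_singleton_zero, Nat.card_unique (α := (⊥ : Ideal R)), mul_one]

end LocalRing

theorem stmt_3_general {R ι : Type*} [CommRing R] [IsLocalRing R] [Finite R]
    [Fintype ι] [Nonempty ι] {s q : ℕ}
    (hq : Nat.card (ResidueField R) = q) (hcard : Nat.card R = q ^ s) :
    (∀ x : ι → R, x ≠ 0 → (q - 1) * q ^ (s * Fintype.card ι - 1) ≤
      Nat.card {v : ι → R // ∑ i, x i * v i ≠ 0}) ∧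
    (∃ x : ι → R, x ≠ 0 ∧ Nat.card {v : ι → R // ∑ i, x i * v i ≠ 0} =
      (q - 1) * q ^ (s * Fintype.card ι - 1)) := by
  set Q := q ^ (s * Fintype.card ι - 1)
  have hs : s ≠ 0 := by
    rintro rfl
    exact Finite.one_lt_card.ne' hcard
  have : Finite (ResidueField R) := .of_surjective _ residue_surjective
  have hq_pos : 0 < q := hq ▸ Nat.card_pos
  have card_pow : Nat.card R ^ Fintype.card ι = q * Q := by
    rw [hcard, ← pow_mul, mul_pow_sub_one (mul_ne_zero hs Fintype.card_ne_zero)]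
  have card_ker (x : ι → R) : Nat.card (Fintype.linearCombination R x).ker *
      Nat.card (Ideal.span (Set.range x)) = Q * q := by
    rw [natCard_ker_linearCombination_mul_natCard_span, card_pow, mul_comm]
  simp only [natCard_sum_mul_ne_zero, card_pow, Nat.sub_one_mul]
  constructor
  · intro x hx
    have hspan : Ideal.span (Set.range x) ≠ ⊥ := by
      simpa [Ideal.span_eq_bot, funext_iff] using hx
    have hle : q ≤ Nat.card (Ideal.span (Set.range x)) := hq ▸ natCard_residueField_le_natCard hspan
    refine Nat.sub_le_sub_left (Nat.le_of_mul_le_mul_right ?_ hq_pos) _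
    exact (Nat.mul_le_mul_left _ hle).trans_eq (card_ker x)
  · obtain ⟨a, ha, haq⟩ := exists_natCard_span_singleton_eq_natCard_residueField R
    have card_ker_const := card_ker fun _ => a
    rw [Set.range_const, haq, hq] at card_ker_const
    exact ⟨fun _ => a, Function.const_ne_zero.2 ha,
      by rw [Nat.eq_of_mul_eq_mul_right hq_pos card_ker_const]⟩

/-- The minimum Hamming distance of `S_k^α` equals `(q−1)·q^(sk−1)`: every
nonzero `x ∈ R^k` gives a codeword of Hamming weight at least `(q−1)·q^(sk−1)`, and some
nonzero `x` attains this weight exactly. -/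
theorem stmt_3
    (R : Type) [CommRing R] [IsLocalRing R] [Fintype R]
    (γ : R) (s q : ℕ)
    (hs : 1 ≤ s)
    (hmax : IsLocalRing.maximalIdeal R = Ideal.span {γ})
    (hnil : γ ^ s = 0)
    (hnil' : 2 ≤ s → γ ^ (s - 1) ≠ 0)
    (hq : Nat.card (R ⧸ Ideal.span ({γ} : Set R)) = q)
    (k : ℕ) (hk : 1 ≤ k) :
    (∀ x : Fin k → R, x ≠ 0 →
      (q - 1) * q ^ (s * k - 1) ≤ Nat.card {v : Fin k → R // ∑ i, x i * v i ≠ 0}) ∧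
    (∃ x : Fin k → R, x ≠ 0 ∧
      Nat.card {v : Fin k → R // ∑ i, x i * v i ≠ 0} = (q - 1) * q ^ (s * k - 1)) := by
  have : Nonempty (Fin k) := Fin.pos_iff_nonempty.1 hk
  have hres : Nat.card (ResidueField R) = q := by rw [ResidueField, hmax, hq]
  have hcard : Nat.card R = q ^ s := by
    rw [natCard_eq_natCard_residueField_pow_nilpotencyClass hmax ⟨s, hnil⟩,
      nilpotencyClass_eq_of_pow_pred_ne_zero hnil hnil', hres]
  simpa only [Fintype.card_fin] using stmt_3_general (ι := Fin k) hres hcard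
end

section
/- Let k ≥ 2, let D ⊆ R^k be a β-column set, and let x ∈ R^k be nonzero with valuation ν(x) = t. Then: (i) x·g ∈ ⟨γ^t⟩ for every g ∈ D; (ii) the number of g ∈ D with x·g = 0 equals q^t·L_β(k−1); (iii) the number of g ∈ D with x·g ∈ ⟨γ^(t+1)⟩ equals q^(s−1)·L_β(k−1); and (iv) the number of g ∈ D with x·g ∉ ⟨γ^(t+1)⟩ equals q^(s(k−1)), and all these values lie in ⟨γ^t⟩ \ ⟨γ^(t+1)⟩. -/
/-- A β-column set: a finite set `D ⊆ R^k` such that every `g ∈ D` has a unit coordinate,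
and every vector of `R^k` with a unit coordinate is `u • g` for a unique unit `u` and a
unique `g ∈ D`. -/
def IsBetaColumnSet {R : Type} [CommRing R] {k : ℕ} (D : Finset (Fin k → R)) : Prop :=
  (∀ g ∈ D, ∃ i, IsUnit (g i)) ∧
  (∀ w : Fin k → R, (∃ i, IsUnit (w i)) →
    ∃! ug : Rˣ × (Fin k → R), ug.2 ∈ D ∧ w = (ug.1 : R) • ug.2)

/-- `L_β(j) = q^((s−1)(j−1))·(q^j − 1)/(q − 1)`, written via the geometric sum. -/
def Lbeta (q s j : ℕ) : ℕ := q ^ ((s - 1) * (j - 1)) * ∑ i ∈ Finset.range j, q ^ i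

/-!
Write `x = γ ^ t • y` with `y` having a unit coordinate. The conditions on `x·g` then say that `y·g`
lies in (or avoids) a proper ideal `I`: the annihilator of `γ ^ t`, or the maximal ideal `𝔪`.
Each column accounts for exactly `|Rˣ|` vectors with a unit coordinate, that is, vectors outside
`𝔪^k`. Since `w ↦ y·w` maps `R^k` onto `R` and `𝔪^k` onto `𝔪`, the number of columns with `y·g ∈ I`
times `|Rˣ|` is `|I| (|R|^(k-1) - |𝔪|^(k-1))`; as `|Rˣ| = |R| - |𝔪|`, the factor `|Rˣ|` cancels and
a geometric sum remains. For `j < s`, multiplication by `γ` maps the annihilator of `γ ^ (j + 1)`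
onto that of `γ ^ j` with a kernel of order `q`, so the annihilator of `γ ^ j` has order `q ^ j`.
-/

section Submodule

variable {R M N : Type*} [Ring R] [AddCommGroup M] [Module R M] [AddCommGroup N] [Module R N]

theorem card_map_mul_card_inf_ker (f : M →ₗ[R] N) (p : Submodule R M) :
    Nat.card (p.map f) * Nat.card ↥(p ⊓ LinearMap.ker f) = Nat.card p := by
  have h := AddSubgroup.relIndex_mul_relIndex ⊥
    (p.toAddSubgroup ⊓ f.toAddMonoidHom.ker) p.toAddSubgroup bot_le inf_le_left
  rwa [AddSubgroup.relIndex_bot_left, AddSubgroup.relIndex_bot_left, AddSubgroup.inf_relIndex_left,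
    AddSubgroup.relIndex_ker, mul_comm] at h

theorem card_inf_comap_mul_card_map (f : M →ₗ[R] N) {p : Submodule R M} {p' : Submodule R N}
    (h : p' ≤ p.map f) :
    Nat.card ↥(p ⊓ p'.comap f) * Nat.card (p.map f) = Nat.card p' * Nat.card p := by
  have hmap : (p ⊓ p'.comap f).map f = p' := by
    rw [← Submodule.map_inf_eq_map_inf_comap, inf_eq_right.2 h]
  have hker : p ⊓ p'.comap f ⊓ LinearMap.ker f = p ⊓ LinearMap.ker f := by
    rw [inf_assoc, inf_eq_right.2 (LinearMap.ker_le_comap f)]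
  rw [← card_map_mul_card_inf_ker f p, ← card_map_mul_card_inf_ker f (p ⊓ p'.comap f), hmap, hker]
  ring

end Submodule

section DotProduct

variable {R ι : Type*} [CommRing R] [Fintype ι]

theorem card_submodule_pi_const (J : Ideal R) :
    Nat.card (Submodule.pi Set.univ fun _ : ι => J) = Nat.card J ^ Fintype.card ι := by
  rw [← Nat.card_eq_fintype_card, ← Nat.card_fun]
  exact Nat.card_congr (Equiv.Set.univPi fun _ : ι => (J : Set R))

theorem map_dotProductBilin_pi_const {y : ι → R} (hy : ∃ i, IsUnit (y i)) (J : Ideal R) :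
    (Submodule.pi Set.univ fun _ => J).map (dotProductBilin R R y) = J := by
  classical
  obtain ⟨i, u, hu⟩ := hy
  refine le_antisymm ?_ fun a ha => ?_
  · rintro _ ⟨w, hw, rfl⟩
    exact J.sum_mem fun j _ => J.mul_mem_left _ (hw j trivial)
  · refine ⟨Pi.single i (↑u⁻¹ * a), fun j _ => ?_, ?_⟩
    · rcases eq_or_ne j i with rfl | hj
      · simpa only [Pi.single_eq_same, SetLike.mem_coe] using J.mul_mem_left _ ha
      · simp [hj]
    · simp [dotProductBilin, ← hu]

theorem card_dotProduct_mem [Finite R] {y : ι → R} (hy : ∃ i, IsUnit (y i)) {I J : Ideal R}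
    (hIJ : I ≤ J) :
    Nat.card {w : ι → R // (∀ i, w i ∈ J) ∧ y ⬝ᵥ w ∈ I} =
      Nat.card I * Nat.card J ^ (Fintype.card ι - 1) := by
  have hmap := map_dotProductBilin_pi_const hy J
  have hcard := card_inf_comap_mul_card_map (dotProductBilin R R y) (hIJ.trans hmap.ge)
  have hι : Fintype.card ι ≠ 0 := fun h => (Fintype.card_eq_zero_iff.1 h).elim hy.choose
  rw [hmap, card_submodule_pi_const, ← mul_pow_sub_one hι, mul_left_comm,
    mul_comm (Nat.card J)] at hcard
  rw [← Nat.eq_of_mul_eq_mul_right Nat.card_pos hcard]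
  exact Nat.card_congr (Equiv.subtypeEquivRight fun w => by simp [dotProductBilin])

theorem card_dotProduct_mem_ideal [Finite R] {y : ι → R} (hy : ∃ i, IsUnit (y i)) (I : Ideal R) :
    Nat.card {w : ι → R // y ⬝ᵥ w ∈ I} = Nat.card I * Nat.card R ^ (Fintype.card ι - 1) := by
  simpa using card_dotProduct_mem hy (le_top : I ≤ ⊤)

end DotProduct

theorem card_and_add_card_and_not {α : Type*} [Finite α] (p r : α → Prop) :
    Nat.card {a // p a ∧ r a} + Nat.card {a // p a ∧ ¬r a} = Nat.card {a // p a} :=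
  Set.ncard_inter_add_ncard_sdiff_eq_ncard {a | p a} {a | r a}

theorem nilpotencyClass_eq_of_pow_eq_zero {R : Type*} [MonoidWithZero R] [Nontrivial R] {a : R}
    {s : ℕ} (hs : 1 ≤ s) (hpow : a ^ s = 0) (hpred : 2 ≤ s → a ^ (s - 1) ≠ 0) :
    nilpotencyClass a = s := by
  obtain ⟨n, rfl⟩ := Nat.exists_eq_add_of_le' hs
  refine nilpotencyClass_eq_succ_iff.2 ⟨hpow, ?_⟩
  rcases n.eq_zero_or_pos with rfl | hn
  · simp
  · exact hpred (by omega)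

section LocalRing

open IsLocalRing

variable {R : Type*} [CommRing R] [IsLocalRing R]

theorem card_units_add_card_maximalIdeal [Finite R] :
    Nat.card Rˣ + Nat.card (maximalIdeal R) = Nat.card R := by
  rw [Nat.card_congr Submonoid.unitsTypeEquivIsUnitSubmonoid.toEquiv]
  exact Set.ncard_add_ncard_compl {a : R | IsUnit a}

theorem card_eq_card_residueField_mul_card_maximalIdeal :
    Nat.card R = Nat.card (ResidueField R) * Nat.card (maximalIdeal R) := by
  rw [mul_comm]
  exact Submodule.card_eq_card_quotient_mul_card (maximalIdeal R)

section DotProduct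

variable {ι : Type*} [Fintype ι]

theorem exists_isUnit_of_isUnit_dotProduct {y w : ι → R} (h : IsUnit (y ⬝ᵥ w)) :
    ∃ i, IsUnit (w i) := by
  contrapose! h
  exact (maximalIdeal R).sum_mem fun i _ => Ideal.mul_mem_left _ _ (h i)

variable [Finite R] {y : ι → R}

theorem card_isUnit_dotProduct (hy : ∃ i, IsUnit (y i)) :
    Nat.card {w : ι → R // IsUnit (y ⬝ᵥ w)} = Nat.card Rˣ * Nat.card R ^ (Fintype.card ι - 1) := by
  have htotal : Nat.card (ι → R) = Nat.card R * Nat.card R ^ (Fintype.card ι - 1) := by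
    simpa using card_dotProduct_mem_ideal hy ⊤
  have hsplit : Nat.card {w : ι → R // IsUnit (y ⬝ᵥ w)} +
      Nat.card {w : ι → R // y ⬝ᵥ w ∈ maximalIdeal R} = Nat.card (ι → R) :=
    Set.ncard_add_ncard_compl _
  rw [htotal, card_dotProduct_mem_ideal hy] at hsplit
  refine Nat.add_right_cancel (hsplit.trans ?_)
  rw [← add_mul, card_units_add_card_maximalIdeal]

theorem card_dotProduct_mem_and_exists_isUnit_add (hy : ∃ i, IsUnit (y i)) {I : Ideal R}
    (hI : I ≠ ⊤) :
    Nat.card {w : ι → R // (∃ i, IsUnit (w i)) ∧ y ⬝ᵥ w ∈ I} +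
        Nat.card I * Nat.card (maximalIdeal R) ^ (Fintype.card ι - 1) =
      Nat.card I * Nat.card R ^ (Fintype.card ι - 1) := by
  rw [← card_dotProduct_mem hy (le_maximalIdeal hI), ← card_dotProduct_mem_ideal hy I,
    ← card_and_add_card_and_not (fun w => y ⬝ᵥ w ∈ I) fun w : ι → R => ∃ i, IsUnit (w i)]
  simp only [and_comm, mem_maximalIdeal, mem_nonunits_iff, not_exists]

end DotProduct

section PrincipalMaximalIdeal

variable {γ c : R} (hmax : maximalIdeal R = Ideal.span {γ})
include hmax

theorem mul_mem_span_mul_iff_mem_maximalIdeal (hc : c ≠ 0) {a : R} :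
    c * a ∈ Ideal.span {c * γ} ↔ a ∈ maximalIdeal R := by
  constructor
  · rw [← not_imp_not, notMem_maximalIdeal, Ideal.mem_span_singleton]
    rintro ha ⟨b, hb⟩
    have hγb : γ * b ∈ maximalIdeal R :=
      hmax ▸ Ideal.mul_mem_right _ _ (Ideal.mem_span_singleton_self γ)
    have hunit : IsUnit (a - γ * b) := by
      rw [← notMem_maximalIdeal] at ha ⊢
      exact fun h => ha (((maximalIdeal R).sub_mem_iff_left hγb).1 h)
    exact hc (hunit.mul_left_eq_zero.1 (by linear_combination hb))
  · rw [hmax, Ideal.mem_span_singleton, Ideal.mem_span_singleton]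
    exact mul_dvd_mul_left _

theorem exists_isUnit_and_smul_eq {ι : Type*} {x : ι → R} (hmem : ∀ i, x i ∈ Ideal.span {c})
    (hnotMem : ∃ i, x i ∉ Ideal.span {c * γ}) :
    ∃ y : ι → R, (∃ i, IsUnit (y i)) ∧ c • y = x := by
  choose y hy using fun i => Ideal.mem_span_singleton.1 (hmem i)
  obtain ⟨i, hi⟩ := hnotMem
  refine ⟨y, ⟨i, ?_⟩, funext fun i => (hy i).symm⟩
  rw [← notMem_maximalIdeal, hmax, Ideal.mem_span_singleton]
  rw [hy, Ideal.mem_span_singleton] at hi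
  exact fun h => hi (mul_dvd_mul_left _ h)

theorem map_mulLeft_torsionOf_mul (hc : c ≠ 0) :
    Submodule.map (LinearMap.mulLeft R γ) (Ideal.torsionOf R R (c * γ)) =
      Ideal.torsionOf R R c := by
  ext a
  simp only [Submodule.mem_map, Ideal.mem_torsionOf_iff, LinearMap.mulLeft_apply, smul_eq_mul]
  constructor
  · rintro ⟨b, hb, rfl⟩
    linear_combination hb
  · intro ha
    have hmem : a ∈ maximalIdeal R := fun hunit => hc (hunit.mul_right_eq_zero.1 ha)
    rw [hmax, Ideal.mem_span_singleton] at hmem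
    obtain ⟨b, rfl⟩ := hmem
    exact ⟨b, by linear_combination ha, rfl⟩

theorem card_torsionOf_eq_card_residueField [Finite R] :
    Nat.card (Ideal.torsionOf R R γ) = Nat.card (ResidueField R) := by
  have h := Submodule.card_eq_card_quotient_mul_card (Ideal.torsionOf R R γ)
  rw [Nat.card_congr (Ideal.quotTorsionOfEquivSpanSingleton R R γ).toEquiv,
    card_eq_card_residueField_mul_card_maximalIdeal, hmax] at h
  exact (Nat.eq_of_mul_eq_mul_right Nat.card_pos h).symm

theorem card_torsionOf_mul [Finite R] (hc : c ≠ 0) :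
    Nat.card (Ideal.torsionOf R R (c * γ)) =
      Nat.card (Ideal.torsionOf R R c) * Nat.card (ResidueField R) := by
  have hker : LinearMap.ker (LinearMap.mulLeft R γ) = Ideal.torsionOf R R γ := by
    ext a
    simp [mul_comm]
  have hle : Ideal.torsionOf R R γ ≤ Ideal.torsionOf R R (c * γ) := fun a ha => by
    rw [Ideal.mem_torsionOf_iff, smul_eq_mul] at ha ⊢
    linear_combination c * ha
  rw [← card_torsionOf_eq_card_residueField hmax, ← map_mulLeft_torsionOf_mul hmax hc,
    ← card_map_mul_card_inf_ker (LinearMap.mulLeft R γ), hker, inf_eq_right.2 hle]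

theorem card_torsionOf_pow [Finite R] {j : ℕ} (hj : j ≤ nilpotencyClass γ) :
    Nat.card (Ideal.torsionOf R R (γ ^ j)) = Nat.card (ResidueField R) ^ j := by
  induction j with
  | zero => simp
  | succ j ih =>
    have hne : γ ^ j ≠ 0 := Nat.notMem_of_lt_sInf hj
    rw [pow_succ, card_torsionOf_mul hmax hne, ih (by omega), pow_succ]

theorem card_eq_card_residueField_pow_nilpotencyClass [Finite R] (hγ : IsNilpotent γ) :
    Nat.card R = Nat.card (ResidueField R) ^ nilpotencyClass γ := by
  rw [← card_torsionOf_pow hmax le_rfl, pow_nilpotencyClass hγ]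
  simp

theorem card_maximalIdeal_eq_card_residueField_pow [Finite R] (hγ : IsNilpotent γ) :
    Nat.card (maximalIdeal R) = Nat.card (ResidueField R) ^ (nilpotencyClass γ - 1) := by
  have : Finite (ResidueField R) := Finite.of_surjective _ residue_surjective
  have h := card_eq_card_residueField_mul_card_maximalIdeal (R := R)
  rw [card_eq_card_residueField_pow_nilpotencyClass hmax hγ,
    ← mul_pow_sub_one (pos_nilpotencyClass_iff.2 hγ).ne'] at h
  exact (Nat.eq_of_mul_eq_mul_left Nat.card_pos h).symm

end PrincipalMaximalIdeal

end LocalRing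

theorem Lbeta_eq_geom_sum₂ {q s : ℕ} (hs : 1 ≤ s) (j : ℕ) :
    Lbeta q s j = ∑ i ∈ Finset.range j, (q ^ s) ^ i * (q ^ (s - 1)) ^ (j - 1 - i) := by
  rw [Lbeta, Finset.mul_sum]
  refine Finset.sum_congr rfl fun i hi => ?_
  obtain ⟨d, hd⟩ : ∃ d, j - 1 = i + d := ⟨j - 1 - i, by have := Finset.mem_range.1 hi; omega⟩
  rw [← mul_pow_sub_one (by omega : s ≠ 0), hd, Nat.add_sub_cancel_left]
  ring

namespace IsBetaColumnSet

open IsLocalRing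

variable {R : Type} [CommRing R] {k : ℕ} {D : Finset (Fin k → R)}

theorem card_units_mul_card_and (hD : IsBetaColumnSet D) {P : (Fin k → R) → Prop}
    (hP : ∀ (u : Rˣ) (w : Fin k → R), P ((u : R) • w) ↔ P w) :
    Nat.card Rˣ * Nat.card {g // g ∈ D ∧ P g} =
      Nat.card {w : Fin k → R // (∃ i, IsUnit (w i)) ∧ P w} := by
  have hunit (u : Rˣ) {g : Fin k → R} (hg : g ∈ D) : ∃ i, IsUnit (((u : R) • g) i) :=
    (hD.1 g hg).imp fun i hi => u.isUnit.mul hi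
  rw [← Nat.card_prod]
  refine Nat.card_eq_of_bijective
    (fun p => ⟨(p.1 : R) • p.2.1, hunit p.1 p.2.2.1, (hP _ _).2 p.2.2.2⟩) ⟨?_, ?_⟩
  · rintro ⟨u, g, hg⟩ ⟨v, h, hh⟩ heq
    obtain ⟨rfl, rfl⟩ := Prod.ext_iff.1 <| (hD.2 _ (hunit u hg.1)).unique
      (y₁ := (u, g)) (y₂ := (v, h)) ⟨hg.1, rfl⟩ ⟨hh.1, congrArg Subtype.val heq⟩
    rfl
  · rintro ⟨w, hw, hPw⟩
    obtain ⟨⟨u, g⟩, ⟨hg, rfl⟩, -⟩ := hD.2 w hw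
    exact ⟨(u, ⟨g, hg, (hP u g).1 hPw⟩), rfl⟩

variable [IsLocalRing R] [Finite R] {y : Fin k → R}

theorem card_dotProduct_mem (hD : IsBetaColumnSet D) (hy : ∃ i, IsUnit (y i)) {I : Ideal R}
    (hI : I ≠ ⊤) :
    Nat.card {g // g ∈ D ∧ y ⬝ᵥ g ∈ I} = Nat.card I * ∑ i ∈ Finset.range (k - 1),
      Nat.card R ^ i * Nat.card (maximalIdeal R) ^ (k - 1 - 1 - i) := by
  have hcard := card_dotProduct_mem_and_exists_isUnit_add hy hI
  rw [← hD.card_units_mul_card_and fun u w => by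
      rw [dotProduct_smul, smul_eq_mul, Ideal.unit_mul_mem_iff_mem _ u.isUnit],
    Fintype.card_fin, ← card_units_add_card_maximalIdeal (R := R), ← geom_sum₂_mul_add,
    card_units_add_card_maximalIdeal, mul_add] at hcard
  refine Nat.eq_of_mul_eq_mul_left (Nat.card_pos (α := Rˣ)) ?_
  rw [Nat.add_right_cancel hcard]
  ring

theorem card_isUnit_dotProduct (hD : IsBetaColumnSet D) (hy : ∃ i, IsUnit (y i)) :
    Nat.card {g // g ∈ D ∧ IsUnit (y ⬝ᵥ g)} = Nat.card R ^ (k - 1) := by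
  have hcard := _root_.card_isUnit_dotProduct hy
  rw [Fintype.card_fin] at hcard
  refine Nat.eq_of_mul_eq_mul_left (Nat.card_pos (α := Rˣ)) ?_
  rw [← hcard, hD.card_units_mul_card_and fun u w => by simp]
  simp [and_iff_right_of_imp exists_isUnit_of_isUnit_dotProduct]

theorem card_dotProduct_mem_eq_mul_Lbeta (hD : IsBetaColumnSet D) {γ : R}
    (hmax : maximalIdeal R = Ideal.span {γ}) (hγ : IsNilpotent γ) (hy : ∃ i, IsUnit (y i))
    {I : Ideal R} (hI : I ≠ ⊤) :
    Nat.card {g // g ∈ D ∧ y ⬝ᵥ g ∈ I} =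
      Nat.card I * Lbeta (Nat.card (ResidueField R)) (nilpotencyClass γ) (k - 1) := by
  rw [hD.card_dotProduct_mem hy hI, Lbeta_eq_geom_sum₂ (pos_nilpotencyClass_iff.2 hγ),
    card_eq_card_residueField_pow_nilpotencyClass hmax hγ,
    card_maximalIdeal_eq_card_residueField_pow hmax hγ]

end IsBetaColumnSet

/-- For `k ≥ 2`, a β-column set `D ⊆ R^k`, and nonzero `x ∈ R^k` with
valuation `ν(x) = t`: (i) `x·g ∈ ⟨γ^t⟩` for all `g ∈ D`; (ii) exactly `q^t·L_β(k−1)`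
elements `g ∈ D` satisfy `x·g = 0`; (iii) exactly `q^(s−1)·L_β(k−1)` elements satisfy
`x·g ∈ ⟨γ^(t+1)⟩`; (iv) exactly `q^(s(k−1))` elements satisfy `x·g ∉ ⟨γ^(t+1)⟩`, these
values lying in `⟨γ^t⟩ \ ⟨γ^(t+1)⟩`. -/
theorem stmt_11
    (R : Type) [CommRing R] [IsLocalRing R] [Fintype R]
    (γ : R) (s q : ℕ)
    (hs : 1 ≤ s)
    (hmax : IsLocalRing.maximalIdeal R = Ideal.span {γ})
    (hnil : γ ^ s = 0)
    (hnil' : 2 ≤ s → γ ^ (s - 1) ≠ 0)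
    (hq : Nat.card (R ⧸ Ideal.span ({γ} : Set R)) = q)
    (k : ℕ) (hk : 2 ≤ k)
    (D : Finset (Fin k → R)) (hD : IsBetaColumnSet D)
    (x : Fin k → R) (hx : x ≠ 0) (t : ℕ)
    (hval1 : ∀ i, x i ∈ Ideal.span ({γ ^ t} : Set R))
    (hval2 : ∃ i, x i ∉ Ideal.span ({γ ^ (t + 1)} : Set R)) :
    (∀ g ∈ D, (∑ i, x i * g i) ∈ Ideal.span ({γ ^ t} : Set R)) ∧
    Nat.card {g : Fin k → R // g ∈ D ∧ ∑ i, x i * g i = 0} = q ^ t * Lbeta q s (k - 1) ∧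
    Nat.card {g : Fin k → R //
        g ∈ D ∧ (∑ i, x i * g i) ∈ Ideal.span ({γ ^ (t + 1)} : Set R)}
      = q ^ (s - 1) * Lbeta q s (k - 1) ∧
    Nat.card {g : Fin k → R //
        g ∈ D ∧ (∑ i, x i * g i) ∉ Ideal.span ({γ ^ (t + 1)} : Set R)}
      = q ^ (s * (k - 1)) := by
  obtain rfl : q = Nat.card (IsLocalRing.ResidueField R) := by
    rw [← hq, ← hmax]
    rfl
  obtain rfl := nilpotencyClass_eq_of_pow_eq_zero hs hnil hnil'
  have hγ : IsNilpotent γ := ⟨_, hnil⟩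
  simp only [pow_succ] at hval2 ⊢
  obtain ⟨y, hy, rfl⟩ := exists_isUnit_and_smul_eq hmax hval1 hval2
  have hne : γ ^ t ≠ 0 := left_ne_zero_of_smul hx
  have ht : t < nilpotencyClass γ := lt_of_not_ge fun h => hne (pow_eq_zero_of_le h hnil)
  have hdot (g : Fin k → R) : ∑ i, (γ ^ t • y) i * g i = γ ^ t * y ⬝ᵥ g :=
    smul_dotProduct (γ ^ t) y g
  simp only [hdot, mul_mem_span_mul_iff_mem_maximalIdeal hmax hne]
  refine ⟨fun g _ => Ideal.mul_mem_right _ _ (Ideal.mem_span_singleton_self _), ?_, ?_, ?_⟩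
  · have htorsion : Ideal.torsionOf R R (γ ^ t) ≠ ⊤ := by rwa [Ne, Ideal.torsionOf_eq_top_iff]
    rw [← card_torsionOf_pow hmax ht.le, ← hD.card_dotProduct_mem_eq_mul_Lbeta hmax hγ hy htorsion]
    simp only [Ideal.mem_torsionOf_iff, smul_eq_mul, mul_comm]
  · rw [hD.card_dotProduct_mem_eq_mul_Lbeta hmax hγ hy Ideal.IsPrime.ne_top',
      card_maximalIdeal_eq_card_residueField_pow hmax hγ]
  · simp only [IsLocalRing.notMem_maximalIdeal]
    rw [hD.card_isUnit_dotProduct hy, card_eq_card_residueField_pow_nilpotencyClass hmax hγ,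
      pow_mul]
end
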